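/- Let A be a finite-dimensional commutative unital ℂ-algebra with a conjugate-linear involution J : A → A satisfying J(x * y) = J(x) * J(y), and a ℂ-linear functional ε : A → ℂ satisfying ε(J(x)) = conj(ε(x)) for all x, such that the form h(x, y) = ε(x * J(y)) is positive definite. Then there exists a norm ‖·‖ on A such that ‖x * y‖ ≤ ‖x‖ · ‖y‖ for all x, y ∈ A and ‖J(x) * x‖ = ‖x‖ · ‖J(x)‖ for all x ∈ A; that is, A admits a canonical C*-Frobenius algebra structure. -/

import Mathlib

/-!
A faithful positive functional `ε` turns `A` into a Hilbert space with inner product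
`⟪x, y⟫ = ε (x⋆ * y)`. Left multiplication by `x⋆` is then the adjoint of left multiplication by
`x`, so the left regular representation is a star homomorphism into the C⋆-algebra of operators on
this Hilbert space. It is injective because `ε (x * x⋆) ≠ 0` forces `x * x⋆ ≠ 0`, and the operator
norm pulls back along it to a C⋆-norm on `A`.
-/

section Polarization

variable {V : Type*} [AddCommGroup V] [Module ℂ V]

theorem isSymm_of_forall_apply_self_im_eq_zero (B : V →ₗ⋆[ℂ] V →ₗ[ℂ] ℂ)
    (hB : ∀ x, (B x x).im = 0) : B.IsSymm where
  eq x y := by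
    have im_eq : (B x y).im = -(B y x).im := by
      have h := hB (x + y)
      simp only [map_add, LinearMap.add_apply, Complex.add_im, hB] at h
      linarith
    have re_eq : (B x y).re = (B y x).re := by
      have h := hB (x + Complex.I • y)
      simp only [map_add, LinearMap.map_smulₛₗ, LinearMap.add_apply, LinearMap.smul_apply,
        Complex.conj_I, RingHom.id_apply, smul_eq_mul, Complex.add_im, Complex.mul_im,
        Complex.add_re, Complex.mul_re, Complex.neg_re, Complex.neg_im, Complex.I_re,
        Complex.I_im, hB] at h
      linarith
    exact Complex.ext re_eq (by simp [im_eq])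

end Polarization

section FaithfulPositive

open scoped ComplexOrder

variable {A : Type*} [NonUnitalRing A] [StarRing A] [Module ℂ A]

/-- A linear functional on a star algebra is positive and faithful if it takes strictly positive
real values on the elements `x⋆ * x` with `x ≠ 0`. -/
def IsFaithfulPositive (ε : A →ₗ[ℂ] ℂ) : Prop :=
  ∀ x, x ≠ 0 → 0 < ε (star x * x)

namespace IsFaithfulPositive

variable {ε : A →ₗ[ℂ] ℂ}

theorem map_star_mul_self_nonneg (hε : IsFaithfulPositive ε) (x : A) : 0 ≤ ε (star x * x) := by
  obtain rfl | hx := eq_or_ne x 0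
  · simp
  · exact (hε x hx).le

theorem map_star_mul_self_eq_zero_iff (hε : IsFaithfulPositive ε) {x : A} :
    ε (star x * x) = 0 ↔ x = 0 :=
  ⟨fun h => by_contra fun hx => (hε x hx).ne' h, fun h => by simp [h]⟩

end IsFaithfulPositive

end FaithfulPositive

section GelfandNaimarkSegal

variable {A : Type*} [NonUnitalRing A] [StarRing A] [Module ℂ A] [StarModule ℂ A]
  [IsScalarTower ℂ A A] [SMulCommClass ℂ A A]

/-- The sesquilinear form `(x, y) ↦ ε (x⋆ * y)` attached to a functional `ε`, conjugate-linear in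
the first variable as Mathlib's inner products are. -/
def gnsForm (ε : A →ₗ[ℂ] ℂ) : A →ₗ⋆[ℂ] A →ₗ[ℂ] ℂ :=
  LinearMap.mk₂'ₛₗ (starRingEnd ℂ) (RingHom.id ℂ) (fun x y => ε (star x * y))
    (fun x y z => by simp only [star_add, add_mul, map_add])
    (fun c x y => by simp only [star_smul, smul_mul_assoc, map_smul, starRingEnd_apply])
    (fun x y z => by simp only [mul_add, map_add])
    (fun c x y => by simp only [mul_smul_comm, map_smul, RingHom.id_apply])

theorem gnsForm_star_mul_left (ε : A →ₗ[ℂ] ℂ) (a x y : A) :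
    gnsForm ε (star a * x) y = gnsForm ε x (a * y) := by
  simp only [gnsForm, LinearMap.mk₂'ₛₗ_apply, star_mul, star_star, mul_assoc]

namespace IsFaithfulPositive

variable {ε : A →ₗ[ℂ] ℂ}

theorem isSymm_gnsForm (hε : IsFaithfulPositive ε) : (gnsForm ε).IsSymm :=
  isSymm_of_forall_apply_self_im_eq_zero _ fun x =>
    (Complex.nonneg_iff.1 (hε.map_star_mul_self_nonneg x)).2.symm

variable (hε : IsFaithfulPositive ε)

/-- The inner product `⟪x, y⟫ = ε (x⋆ * y)` on `A` induced by a faithful positive functional. -/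
abbrev gnsCore : InnerProductSpace.Core ℂ A where
  inner x y := gnsForm ε x y
  conj_inner_symm x y := hε.isSymm_gnsForm.eq y x
  re_inner_nonneg x := (Complex.nonneg_iff.1 (hε.map_star_mul_self_nonneg x)).1
  add_left x y z := by simp only [map_add, LinearMap.add_apply]
  smul_left x y c := by simp only [LinearMap.map_smulₛₗ, LinearMap.smul_apply, smul_eq_mul]
  definite _ := hε.map_star_mul_self_eq_zero_iff.1

/-- The space of the Gelfand–Naimark–Segal representation of a faithful positive functional: a type
synonym of `A`, so that the norm of `gnsCore` is not imposed on `A` itself. -/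
def GNSSpace (_ : IsFaithfulPositive ε) : Type _ := A

noncomputable instance : NormedAddCommGroup hε.GNSSpace := hε.gnsCore.toNormedAddCommGroup

noncomputable instance : InnerProductSpace ℂ hε.GNSSpace :=
  InnerProductSpace.ofCore hε.gnsCore.toCore

/-- The identity map from `A` to its synonym `GNSSpace`. -/
def toGNSSpace : A ≃ₗ[ℂ] hε.GNSSpace := LinearEquiv.refl ℂ A

theorem gnsSpace_hom_ext {S T : hε.GNSSpace →L[ℂ] hε.GNSSpace}
    (h : ∀ x, S (hε.toGNSSpace x) = T (hε.toGNSSpace x)) : S = T :=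
  ContinuousLinearMap.ext (hε.toGNSSpace.surjective.forall.2 h)

variable [FiniteDimensional ℂ A]

instance : FiniteDimensional ℂ hε.GNSSpace := hε.toGNSSpace.finiteDimensional

instance : CompleteSpace hε.GNSSpace := FiniteDimensional.complete ℂ _

/-- Left multiplication by `a` as an operator on the Gelfand–Naimark–Segal space. -/
noncomputable def gnsLeftMul (a : A) : hε.GNSSpace →L[ℂ] hε.GNSSpace :=
  LinearMap.toContinuousLinearMap (hε.toGNSSpace.conj (LinearMap.mulLeft ℂ a))

theorem gnsLeftMul_toGNSSpace (a x : A) :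
    hε.gnsLeftMul a (hε.toGNSSpace x) = hε.toGNSSpace (a * x) := rfl

theorem gnsLeftMul_star (a : A) :
    hε.gnsLeftMul (star a) = ContinuousLinearMap.adjoint (hε.gnsLeftMul a) :=
  (ContinuousLinearMap.eq_adjoint_iff _ _).2 <|
    hε.toGNSSpace.surjective.forall₂.2 fun x y => gnsForm_star_mul_left ε a x y

/-- The left regular representation of `A` on the Gelfand–Naimark–Segal space. -/
noncomputable def gnsRepresentation : A →⋆ₙₐ[ℂ] (hε.GNSSpace →L[ℂ] hε.GNSSpace) where
  toFun := hε.gnsLeftMul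
  map_smul' c a := hε.gnsSpace_hom_ext fun x => by
    simp [gnsLeftMul_toGNSSpace, smul_mul_assoc]
  map_zero' := hε.gnsSpace_hom_ext fun x => by simp [gnsLeftMul_toGNSSpace]
  map_add' a b := hε.gnsSpace_hom_ext fun x => by simp [gnsLeftMul_toGNSSpace, add_mul]
  map_mul' a b := hε.gnsSpace_hom_ext fun x => by simp [gnsLeftMul_toGNSSpace, mul_assoc]
  map_star' := hε.gnsLeftMul_star

theorem gnsRepresentation_injective : Function.Injective hε.gnsRepresentation := by
  refine (injective_iff_map_eq_zero _).2 fun a ha => ?_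
  have mul_star_eq_zero : a * star a = 0 :=
    hε.toGNSSpace.map_eq_zero_iff.1 <| DFunLike.congr_fun ha (hε.toGNSSpace (star a))
  refine star_eq_zero.1 (hε.map_star_mul_self_eq_zero_iff.1 ?_)
  rw [star_star, mul_star_eq_zero, map_zero]

/-- The operator norm of the left regular representation, a C⋆-norm on `A`. -/
noncomputable def gnsNorm (x : A) : ℝ := ‖hε.gnsRepresentation x‖

theorem gnsNorm_eq_zero_iff (x : A) : hε.gnsNorm x = 0 ↔ x = 0 :=
  norm_eq_zero.trans (map_eq_zero_iff _ hε.gnsRepresentation_injective)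

theorem gnsNorm_add_le (x y : A) : hε.gnsNorm (x + y) ≤ hε.gnsNorm x + hε.gnsNorm y := by
  simpa only [gnsNorm, map_add] using norm_add_le _ _

theorem gnsNorm_smul (c : ℂ) (x : A) : hε.gnsNorm (c • x) = ‖c‖ * hε.gnsNorm x := by
  simp only [gnsNorm, map_smul, norm_smul]

theorem gnsNorm_mul_le (x y : A) : hε.gnsNorm (x * y) ≤ hε.gnsNorm x * hε.gnsNorm y := by
  simpa only [gnsNorm, map_mul] using norm_mul_le _ _

theorem gnsNorm_star_mul_self (x : A) :
    hε.gnsNorm (star x * x) = hε.gnsNorm x * hε.gnsNorm (star x) := by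
  simp only [gnsNorm, map_mul, map_star, CStarRing.norm_star_mul_self, norm_star]

end IsFaithfulPositive

end GelfandNaimarkSegal

open scoped ComplexOrder in
theorem stmt15_general {A : Type*} [NonUnitalRing A] [Module ℂ A] [IsScalarTower ℂ A A]
    [SMulCommClass ℂ A A] [FiniteDimensional ℂ A]
    (J : A →ₛₗ[starRingEnd ℂ] A) (hJinv : ∀ x : A, J (J x) = x)
    (hJmul : ∀ x y : A, J (x * y) = J y * J x)
    (ε : A →ₗ[ℂ] ℂ) (hpos : ∀ x : A, x ≠ 0 → 0 < ε (J x * x)) :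
    ∃ N : A → ℝ,
      (∀ x : A, N x = 0 ↔ x = 0) ∧
      (∀ x y : A, N (x + y) ≤ N x + N y) ∧
      (∀ (c : ℂ) (x : A), N (c • x) = ‖c‖ * N x) ∧
      (∀ x y : A, N (x * y) ≤ N x * N y) ∧
      (∀ x : A, N (J x * x) = N x * N (J x)) := by
  let _ : StarRing A :=
    { star := J, star_involutive := hJinv, star_mul := hJmul, star_add := map_add J }
  have : StarModule ℂ A := ⟨J.map_smulₛₗ⟩
  have hε : IsFaithfulPositive ε := hpos
  exact ⟨hε.gnsNorm, hε.gnsNorm_eq_zero_iff, hε.gnsNorm_add_le, hε.gnsNorm_smul,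
    hε.gnsNorm_mul_le, hε.gnsNorm_star_mul_self⟩

/-- Let `A` be a finite-dimensional commutative unital ℂ-algebra with
a conjugate-linear involution `J` satisfying `J (x * y) = J x * J y` and a ℂ-linear
functional `ε` with `ε (J x) = conj (ε x)`, such that `h x y = ε (x * J y)` is
positive definite.  Then there is a norm `N` on `A` that is submultiplicative
(`N (x * y) ≤ N x * N y`) and satisfies the C*-identity
`N (J x * x) = N x * N (J x)`; i.e. `A` admits a canonical C*-Frobenius algebra
structure. -/
theorem stmt15 {A : Type*} [CommRing A] [Algebra ℂ A] [FiniteDimensional ℂ A]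
    (J : A →ₛₗ[starRingEnd ℂ] A) (hJinv : ∀ x : A, J (J x) = x)
    (hJmul : ∀ x y : A, J (x * y) = J x * J y)
    (ε : A →ₗ[ℂ] ℂ) (hJε : ∀ x : A, ε (J x) = starRingEnd ℂ (ε x))
    (hpos : ∀ x : A, x ≠ 0 → (ε (x * J x)).im = 0 ∧ 0 < (ε (x * J x)).re) :
    ∃ N : A → ℝ,
      -- N is a norm on the complex vector space A
      (∀ x : A, N x = 0 ↔ x = 0) ∧
      (∀ x y : A, N (x + y) ≤ N x + N y) ∧
      (∀ (c : ℂ) (x : A), N (c • x) = ‖c‖ * N x) ∧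
      -- N is submultiplicative
      (∀ x y : A, N (x * y) ≤ N x * N y) ∧
      -- the C*-identity
      (∀ x : A, N (J x * x) = N x * N (J x)) :=
  stmt15_general J hJinv (fun x y => by rw [hJmul, mul_comm]) ε fun x hx =>
    Complex.pos_iff.2 (mul_comm x (J x) ▸ ⟨(hpos x hx).2, (hpos x hx).1.symm⟩)
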